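/- arXiv:1806.03221 — 2 statements merged into one kernel-verified Lean document; each statement's English description precedes it below -/
import Mathlib

section
/- If W = (w_1,...,w_{k-1}) is a tame legal schedule, then (2,2,W) is also tame. In particular, all schedules of the form (2,2,...,2) are tame. -/
open Polynomial Finset

noncomputable section

abbrev K : Type := RatFunc ℚ

def qq : K := RatFunc.X

def qint (q : K) (n : ℕ) : K := ∑ i ∈ Finset.range n, q ^ i

def Legal (W : List ℕ) : Prop :=
  (∀ h : W ≠ [], 1 ≤ W.head h ∧ W.head h ≤ 2) ∧
    List.Chain' (fun a b => 1 ≤ b ∧ b ≤ a + 1) W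

def Prev (q : K) : List ℕ → MvPolynomial ℤ K
  | [] => MvPolynomial.C q * MvPolynomial.X (-1) + MvPolynomial.X 0
  | w :: V =>
      MvPolynomial.C ((1 - q)⁻¹) *
        ((MvPolynomial.X ((V.length : ℤ) + 1) - MvPolynomial.C (q ^ w)) * Prev q V +
          (1 - MvPolynomial.X ((V.length : ℤ) + 1)) *
            MvPolynomial.aeval
              (fun j : ℤ =>
                if (V.length : ℤ) + 1 - (w : ℤ) ≤ j ∧ j ≤ (V.length : ℤ) then
                  MvPolynomial.C q * MvPolynomial.X j
                else MvPolynomial.X j)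
              (Prev q V))

def Psched (q : K) (W : List ℕ) : MvPolynomial ℤ K := Prev q W.reverse

def Qsched (q : K) (W : List ℕ) : Polynomial K :=
  MvPolynomial.aeval (fun _ : ℤ => (Polynomial.X : Polynomial K)) (Psched q W)

def TameFE (q : K) (W : List ℕ) : Prop :=
  ∀ x : K, x ≠ 0 →
    (1 - q / x) * (Qsched q W).eval x +
        x ^ (W.length + 1) * (1 - q * x) * (Qsched q W).eval x⁻¹ =
      (1 + x ^ (W.length + 1)) * ((1 - q ^ 2) * (W.map (qint q)).prod)

theorem qq_ne_one : (1:K) - qq ≠ 0 := by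
  intro h
  have h1 : (RatFunc.X : RatFunc ℚ) = 1 := (sub_eq_zero.mp h).symm
  have h2 : algebraMap (Polynomial ℚ) (RatFunc ℚ) Polynomial.X
      = algebraMap (Polynomial ℚ) (RatFunc ℚ) 1 := by
    rw [RatFunc.algebraMap_X, map_one, h1]
  have h3 := RatFunc.algebraMap_injective ℚ h2
  have h4 := congrArg (Polynomial.eval 0) h3
  simp at h4

def sg (q : K) (n : ℤ) (w : ℕ) : ℤ → MvPolynomial ℤ K := fun j =>
  if n + 1 - (w : ℤ) ≤ j ∧ j ≤ n then MvPolynomial.C q * MvPolynomial.X j else MvPolynomial.X j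

def stp (q : K) (n : ℤ) (w : ℕ) (p : MvPolynomial ℤ K) : MvPolynomial ℤ K :=
  MvPolynomial.C ((1 - q)⁻¹) *
    ((MvPolynomial.X (n + 1) - MvPolynomial.C (q ^ w)) * p +
      (1 - MvPolynomial.X (n + 1)) * MvPolynomial.aeval (sg q n w) p)

def RR (q : K) (n0 : ℤ) (p : MvPolynomial ℤ K) : List ℕ → MvPolynomial ℤ K
  | [] => p
  | w :: V => stp q (n0 + V.length) w (RR q n0 p V)

theorem Prev_append (q : K) (L V : List ℕ) :
    Prev q (V ++ L) = RR q L.length (Prev q L) V := by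
  induction V with
  | nil => rfl
  | cons w V ih =>
    have e : (((V ++ L).length : ℕ) : ℤ) = (L.length : ℤ) + V.length := by
      simp; ring
    simp only [List.cons_append, Prev, RR, ih, e]
    rfl

theorem stp_add (q : K) (n : ℤ) (w : ℕ) (p r : MvPolynomial ℤ K) :
    stp q n w (p + r) = stp q n w p + stp q n w r := by
  simp only [stp, map_add]; ring

theorem stp_C_mul (q : K) (n : ℤ) (w : ℕ) (c : K) (p : MvPolynomial ℤ K) :
    stp q n w (MvPolynomial.C c * p) = MvPolynomial.C c * stp q n w p := by
  simp only [stp, map_mul, MvPolynomial.aeval_C, MvPolynomial.algebraMap_eq]; ring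

theorem stp_X_mul (q : K) (n : ℤ) (w : ℕ) (i : ℤ) (hi : i < n + 1 - w) (p : MvPolynomial ℤ K) :
    stp q n w (MvPolynomial.X i * p) = MvPolynomial.X i * stp q n w p := by
  have : sg q n w i = MvPolynomial.X i := by
    unfold sg; rw [if_neg]; intro h; omega
  simp only [stp, map_mul, MvPolynomial.aeval_X, this]; ring

theorem RR_add (q : K) (n : ℤ) (V : List ℕ) (p r : MvPolynomial ℤ K) :
    RR q n (p + r) V = RR q n p V + RR q n r V := by
  induction V with
  | nil => rfl
  | cons w V ih => simp only [RR, ih, stp_add]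

theorem RR_C_mul (q : K) (n : ℤ) (V : List ℕ) (c : K) (p : MvPolynomial ℤ K) :
    RR q n (MvPolynomial.C c * p) V = MvPolynomial.C c * RR q n p V := by
  induction V with
  | nil => rfl
  | cons w V ih => simp only [RR, ih, stp_C_mul]

/-- windows of the reversed schedule start at `s` or later -/
def Good (s : ℤ) : List ℕ → Prop
  | [] => True
  | w :: V => Good s V ∧ 1 ≤ w ∧ (w : ℤ) ≤ V.length + 1 - s

theorem RR_X_mul (q : K) (V : List ℕ) (hV : Good (-1) V) (i : ℤ) (hi : i ≤ 0)
    (p : MvPolynomial ℤ K) :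
    RR q 2 (MvPolynomial.X i * p) V = MvPolynomial.X i * RR q 2 p V := by
  induction V with
  | nil => rfl
  | cons w V ih =>
    obtain ⟨h1, h2, h3⟩ := hV
    simp only [RR, ih h1]
    rw [stp_X_mul]
    omega

theorem qint_eq (q : K) (hq : 1 - q ≠ 0) (w : ℕ) : (1 - q)⁻¹ * (1 - q ^ w) = qint q w := by
  unfold qint
  rw [inv_mul_eq_iff_eq_mul₀ hq, mul_neg_geom_sum]

theorem RR_one (q : K) (hq : 1 - q ≠ 0) (n : ℤ) (V : List ℕ) :
    RR q n 1 V = MvPolynomial.C (V.map (qint q)).prod := by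
  induction V with
  | nil => simp [RR]
  | cons w V ih =>
    simp only [RR, ih, stp, MvPolynomial.aeval_C, MvPolynomial.algebraMap_eq, List.map_cons,
      List.prod_cons]
    rw [← qint_eq q hq w]
    simp only [map_mul, map_sub, map_one]
    ring

/-- the product x_1 ⋯ x_n -/
def mon (n : ℕ) : MvPolynomial ℤ K := ∏ i ∈ Finset.range n, MvPolynomial.X ((i : ℤ) + 1)

theorem aeval_mon (q : K) (n w : ℕ) (h : w ≤ n) :
    MvPolynomial.aeval (sg q n w) (mon n) = MvPolynomial.C (q ^ w) * mon n := by
  obtain ⟨m, rfl⟩ := Nat.exists_eq_add_of_le' h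
  unfold mon
  rw [map_prod, Finset.prod_range_add, Finset.prod_range_add]
  have h1 : ∀ i ∈ Finset.range m, MvPolynomial.aeval (sg q ((m + w : ℕ) : ℤ) w)
      (MvPolynomial.X ((i : ℤ) + 1) : MvPolynomial ℤ K) = MvPolynomial.X ((i : ℤ) + 1) := by
    intro i hi
    have := Finset.mem_range.mp hi
    rw [MvPolynomial.aeval_X, sg, if_neg]
    push_cast; omega
  have h2 : ∀ i ∈ Finset.range w, MvPolynomial.aeval (sg q ((m + w : ℕ) : ℤ) w)
      (MvPolynomial.X (((m + i : ℕ) : ℤ) + 1) : MvPolynomial ℤ K)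
        = MvPolynomial.C q * MvPolynomial.X (((m + i : ℕ) : ℤ) + 1) := by
    intro i hi
    have := Finset.mem_range.mp hi
    rw [MvPolynomial.aeval_X, sg, if_pos]
    push_cast; omega
  rw [Finset.prod_congr rfl h1, Finset.prod_congr rfl h2, Finset.prod_mul_distrib]
  simp only [Finset.prod_const, Finset.card_range, map_pow]
  ring

theorem RR_mon (q : K) (hq : 1 - q ≠ 0) (V : List ℕ) (hV : Good (-1) V) :
    RR q 2 (mon 2) V = MvPolynomial.C (V.map (qint q)).prod * mon (V.length + 2) := by
  induction V with
  | nil => simp [RR]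
  | cons w V ih =>
    obtain ⟨h1, h2, h3⟩ := hV
    have e : (2 : ℤ) + V.length = ((V.length + 2 : ℕ) : ℤ) := by push_cast; ring
    have e2 : mon ((w :: V).length + 2) = mon (V.length + 2)
        * MvPolynomial.X (((V.length + 2 : ℕ) : ℤ) + 1) := by
      unfold mon
      rw [List.length_cons, show V.length + 1 + 2 = (V.length + 2) + 1 by ring,
        Finset.prod_range_succ]
    simp only [RR, ih h1, stp, List.map_cons, List.prod_cons, e, e2]
    rw [map_mul, aeval_mon _ _ _ (by omega), ← qint_eq q hq w]
    simp only [map_mul, map_sub, map_one, MvPolynomial.aeval_C, MvPolynomial.algebraMap_eq]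
    ring

theorem RR_shift (q : K) (V : List ℕ) (p : MvPolynomial ℤ K) (n : ℤ) :
    RR q (n + 2) (MvPolynomial.rename (fun j : ℤ => j + 2) p) V =
      MvPolynomial.rename (fun j : ℤ => j + 2) (RR q n p V) := by
  induction V with
  | nil => rfl
  | cons w V ih =>
    simp only [RR, ih, stp, map_mul, map_add, map_sub, map_one, MvPolynomial.rename_C,
      MvPolynomial.rename_X]
    have e : n + 2 + (V.length : ℤ) + 1 = n + V.length + 1 + 2 := by ring
    rw [e]
    congr 3
    rw [MvPolynomial.aeval_rename]
    have : (MvPolynomial.rename (fun j : ℤ => j + 2)) ((MvPolynomial.aeval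
        (sg q (n + V.length) w)) (RR q n p V)) = ((MvPolynomial.rename (R := K)
          (fun j : ℤ => j + 2)).comp (MvPolynomial.aeval (sg q (n + V.length) w))) (RR q n p V) :=
      rfl
    rw [this]
    congr 1
    apply MvPolynomial.algHom_ext
    intro j
    simp only [MvPolynomial.aeval_X, AlgHom.comp_apply, Function.comp, sg]
    by_cases hc : n + (V.length : ℤ) + 1 - w ≤ j ∧ j ≤ n + V.length
    · rw [if_pos (by omega), if_pos hc]; simp
    · rw [if_neg (by omega), if_neg hc]; simp

theorem Prev22 (q : K) (hq : 1 - q ≠ 0) : Prev q [2, 2] =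
    MvPolynomial.C q * (MvPolynomial.X (-1) * mon 2)
    + MvPolynomial.C (q ^ 2) * (MvPolynomial.X (-1) * MvPolynomial.X 1)
    + MvPolynomial.C (1 + q) * (MvPolynomial.X 0 * mon 2)
    + MvPolynomial.C ((1 + q) * q ^ 2) * (MvPolynomial.X (-1) * 1)
    + MvPolynomial.C q * (MvPolynomial.X 0 * MvPolynomial.X 2)
    + MvPolynomial.C (q ^ 2) * (MvPolynomial.X 0 * 1) := by
  have hC : (MvPolynomial.C ((1 - q)⁻¹) : MvPolynomial ℤ K) * (1 - MvPolynomial.C q) = 1 := by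
    rw [← MvPolynomial.C_1, ← MvPolynomial.C_sub, ← MvPolynomial.C_mul, inv_mul_cancel₀ hq]
  have h1 : Prev q [2] = (MvPolynomial.X 1 + MvPolynomial.C q) *
      (MvPolynomial.C q * MvPolynomial.X (-1) + MvPolynomial.X 0) := by
    simp [Prev, MvPolynomial.algebraMap_eq]
    linear_combination ((MvPolynomial.X 1 + MvPolynomial.C q) *
      (MvPolynomial.C q * MvPolynomial.X (-1) + MvPolynomial.X 0)) * hC
  rw [Prev, h1]
  simp [mon, Finset.prod_range_succ, MvPolynomial.algebraMap_eq]
  generalize (MvPolynomial.C ((1 - q)⁻¹) : MvPolynomial ℤ K) = I at *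
  generalize (MvPolynomial.C q : MvPolynomial ℤ K) = Q at *
  generalize (MvPolynomial.X (-1) : MvPolynomial ℤ K) = a at *
  generalize (MvPolynomial.X 0 : MvPolynomial ℤ K) = b at *
  generalize (MvPolynomial.X 1 : MvPolynomial ℤ K) = c at *
  generalize (MvPolynomial.X 2 : MvPolynomial ℤ K) = d at *
  linear_combination (Q * a * c * d + Q ^ 2 * a * c + (1 + Q) * b * c * d + (1 + Q) * Q ^ 2 * a
    + Q * b * d + Q ^ 2 * b) * hC

def ev : MvPolynomial ℤ K →ₐ[K] Polynomial K :=
  MvPolynomial.aeval (fun _ : ℤ => (Polynomial.X : Polynomial K))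

theorem ev_mon (n : ℕ) : ev (mon n) = Polynomial.X ^ n := by
  simp [ev, mon, map_prod]

theorem structural (q : K) (hq : 1 - q ≠ 0) (W : List ℕ) (hW : Good (-1) W.reverse) :
    Qsched q (2 :: 2 :: W) = Polynomial.C q * Polynomial.X * Qsched q W
      + Polynomial.C ((2 * q ^ 2 + q ^ 3) * (W.map (qint q)).prod) * Polynomial.X
      + Polynomial.C ((1 + 2 * q) * (W.map (qint q)).prod) * Polynomial.X ^ (W.length + 3) := by
  have h0 : Prev q W.reverse = RR q 0 (MvPolynomial.C q * MvPolynomial.X (-1)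
      + MvPolynomial.X 0) W.reverse := by
    have := Prev_append q [] W.reverse
    simpa [Prev] using this
  have hs := RR_shift q W.reverse (MvPolynomial.C q * MvPolynomial.X (-1) + MvPolynomial.X 0) 0
  rw [← h0] at hs
  simp only [map_add, map_mul, MvPolynomial.rename_C, MvPolynomial.rename_X] at hs
  norm_num at hs
  rw [RR_add, RR_C_mul] at hs
  have hs2 := congrArg ev hs
  have hr : ev (MvPolynomial.rename (fun j : ℤ => j + 2) (Prev q W.reverse))
      = ev (Prev q W.reverse) := by
    unfold ev; rw [MvPolynomial.aeval_rename]; rfl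
  rw [hr] at hs2
  have hp : ((W.reverse).map (qint q)).prod = (W.map (qint q)).prod := by
    rw [List.map_reverse, List.prod_reverse]
  have evC : ∀ c, ev (MvPolynomial.C c) = Polynomial.C c := by
    intro c; simp [ev, Polynomial.algebraMap_eq]
  have evX : ∀ c, ev (MvPolynomial.X c) = Polynomial.X := by
    intro c; simp [ev]
  change ev (Prev q (2 :: 2 :: W).reverse) = Polynomial.C q * Polynomial.X * ev (Prev q W.reverse)
    + _ + _
  have e : (2 :: 2 :: W).reverse = W.reverse ++ [2, 2] := by simp
  rw [e, Prev_append, Prev22 q hq]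
  have l2 : (([2, 2] : List ℕ).length : ℤ) = 2 := rfl
  rw [l2]
  simp only [RR_add, RR_C_mul, RR_X_mul q _ hW (-1) (by norm_num), RR_X_mul q _ hW 0 le_rfl,
    RR_mon q hq _ hW, RR_one q hq, hp]
  simp only [map_add, map_mul, evC, evX, ev_mon, List.length_reverse, map_one, map_pow] at hs2 ⊢
  have c2 : (Polynomial.C (2 : K)) = 2 := rfl
  rw [← hs2, c2]
  ring

theorem good_of_chain (s : ℤ) (V : List ℕ) (h1 : ∀ w ∈ V, 1 ≤ w)
    (hc : List.IsChain (fun a b => a ≤ b + 1) V)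
    (hl : ∀ h : V ≠ [], (V.getLast h : ℤ) ≤ 1 - s) : Good s V := by
  induction V with
  | nil => trivial
  | cons w V ih =>
    cases V with
    | nil =>
      refine ⟨trivial, h1 w (by simp), ?_⟩
      have := hl (by simp)
      simpa using this
    | cons u V =>
      rw [List.isChain_cons_cons] at hc
      have hg : Good s (u :: V) := by
        apply ih (fun w hw => h1 w (List.mem_cons_of_mem _ hw)) hc.2
        intro h
        have := hl (by simp)
        rwa [List.getLast_cons h] at this
      refine ⟨hg, h1 w (by simp), ?_⟩
      have h3 := hg.2.2
      have h4 := hc.1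
      rw [List.length_cons]
      push_cast
      omega

theorem legal_good (s : ℤ) (W : List ℕ) (hL : Legal (2 :: 2 :: W))
    (hh : ∀ h : W ≠ [], (W.head h : ℤ) ≤ 1 - s) : Good s W.reverse := by
  have hc : List.IsChain (fun a b : ℕ => 1 ≤ b ∧ b ≤ a + 1) (2 :: 2 :: W) := hL.2
  rw [List.isChain_cons_cons] at hc
  have hc2 := hc.2
  apply good_of_chain
  · intro w hw
    rw [List.mem_reverse] at hw
    clear hc hL hh
    generalize 2 = a at hc2
    induction W generalizing a with
    | nil => simp at hw
    | cons b W ih =>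
      rw [List.isChain_cons_cons] at hc2
      rcases List.mem_cons.mp hw with rfl | h
      · exact hc2.1.1
      · exact ih h b hc2.2
  · rw [List.isChain_reverse]
    have := hc2.tail
    simp only [List.tail_cons] at this
    exact this.imp (fun a b h => h.2)
  · intro h
    rw [List.getLast_reverse]
    exact hh _

/-- `k` is a polynomial in `q` with value `r` at `q = 1` -/
def Ev (k : K) (r : ℚ) : Prop :=
  ∃ p : Polynomial ℚ, algebraMap (Polynomial ℚ) (RatFunc ℚ) p = k ∧ p.eval 1 = r

theorem Ev.mul {a b : K} {r s : ℚ} (h : Ev a r) (h' : Ev b s) : Ev (a * b) (r * s) := by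
  obtain ⟨p, rfl, rfl⟩ := h
  obtain ⟨p', rfl, rfl⟩ := h'
  exact ⟨p * p', by simp, by simp⟩

theorem Ev.add {a b : K} {r s : ℚ} (h : Ev a r) (h' : Ev b s) : Ev (a + b) (r + s) := by
  obtain ⟨p, rfl, rfl⟩ := h
  obtain ⟨p', rfl, rfl⟩ := h'
  exact ⟨p + p', by simp, by simp⟩

theorem Ev.unique {a : K} {r s : ℚ} (h : Ev a r) (h' : Ev a s) : r = s := by
  obtain ⟨p, rfl, rfl⟩ := h
  obtain ⟨p', h, rfl⟩ := h'
  rw [RatFunc.algebraMap_injective ℚ h]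

theorem Ev_one : Ev 1 1 := ⟨1, by simp, by simp⟩

theorem Ev_qq : Ev qq 1 := ⟨Polynomial.X, by simp [qq], by simp⟩

theorem Ev_pow (n : ℕ) : Ev (qq ^ n) 1 := by
  induction n with
  | zero => simpa using Ev_one
  | succ n ih => simpa [pow_succ] using ih.mul Ev_qq

theorem Ev_qint (n : ℕ) : Ev (qint qq n) n := by
  induction n with
  | zero => exact ⟨0, by simp [qint], by simp⟩
  | succ n ih =>
    have := ih.add (Ev_pow n)
    rw [qint, Finset.sum_range_succ]
    push_cast
    exact this

theorem Ev_fac (e w : ℕ) (h : e ≤ w) : Ev ((1 - qq)⁻¹ * (qq ^ e - qq ^ w)) ((w : ℚ) - e) := by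
  obtain ⟨m, rfl⟩ := Nat.exists_eq_add_of_le h
  have h1 := (Ev_pow e).mul (Ev_qint m)
  rw [← qint_eq qq qq_ne_one] at h1
  convert h1 using 1
  · rw [pow_add]; ring
  · push_cast; ring

theorem Ev_prod (W : List ℕ) : ∃ r, Ev (W.map (qint qq)).prod r := by
  induction W with
  | nil => exact ⟨1, by simpa using Ev_one⟩
  | cons w W ih =>
    obtain ⟨r, hr⟩ := ih
    exact ⟨w * r, by simpa using (Ev_qint w).mul hr⟩

def FF (q : K) (V : List ℕ) (c : ℤ → K) : Polynomial K :=
  MvPolynomial.aeval (fun j : ℤ => Polynomial.C (c j) * Polynomial.X) (Prev q V)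

def upd (q : K) (n : ℤ) (w : ℕ) (c : ℤ → K) : ℤ → K := fun j =>
  if n + 1 - (w : ℤ) ≤ j ∧ j ≤ n then q * c j else c j

theorem FF_cons (q : K) (w : ℕ) (V : List ℕ) (c : ℤ → K) :
    FF q (w :: V) c = Polynomial.C ((1 - q)⁻¹) *
      ((Polynomial.C (c (V.length + 1)) * Polynomial.X - Polynomial.C (q ^ w)) * FF q V c
      + (1 - Polynomial.C (c (V.length + 1)) * Polynomial.X) *
        FF q V (upd q V.length w c)) := by
  unfold FF
  rw [Prev]
  simp only [map_mul, map_add, map_sub, map_one, MvPolynomial.aeval_C, MvPolynomial.aeval_X,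
    Polynomial.algebraMap_eq]
  congr 3
  rw [← AlgHom.comp_apply]
  congr 1
  apply MvPolynomial.algHom_ext
  intro j
  simp only [MvPolynomial.aeval_X, AlgHom.comp_apply, upd]
  split_ifs
  · simp [Polynomial.algebraMap_eq]; ring
  · simp

structure Data (V : List ℕ) (a b g d : ℚ) : Prop where
  ex : ∃ α β γ δ : K, Ev α a ∧ Ev β b ∧ Ev γ g ∧ Ev δ d ∧ ∀ c : ℤ → K,
    (FF qq V c).natDegree ≤ V.length + 1 ∧ (FF qq V c).coeff 0 = 0 ∧
    (FF qq V c).coeff 1 = α * c (-1) + β * c 0 ∧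
    (FF qq V c).coeff (V.length + 1) =
      (∏ i ∈ Finset.range V.length, c ((i : ℤ) + 1)) * (γ * c (-1) + δ * c 0)

theorem Data_nil : Data [] 1 1 1 1 := by
  refine ⟨qq, 1, qq, 1, Ev_qq, Ev_one, Ev_qq, Ev_one, fun c => ?_⟩
  have : FF qq [] c = Polynomial.C (qq * c (-1) + c 0) * Polynomial.X := by
    simp [FF, Prev, Polynomial.algebraMap_eq]; ring
  rw [this]
  refine ⟨?_, by simp, by simp, by simp⟩
  exact (Polynomial.natDegree_C_mul_le _ _).trans Polynomial.natDegree_X_le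

theorem prod_upd (q : K) (n w m : ℕ) (h : m = min n w) (c : ℤ → K) :
    ∏ i ∈ Finset.range n, upd q n w c ((i : ℤ) + 1) =
      q ^ m * ∏ i ∈ Finset.range n, c ((i : ℤ) + 1) := by
  obtain ⟨l, hl⟩ := Nat.exists_eq_add_of_le' (show m ≤ n by omega)
  have h1 : ∀ i ∈ Finset.range l, upd q n w c ((i : ℤ) + 1) = c ((i : ℤ) + 1) := by
    intro i hi
    have := Finset.mem_range.mp hi
    rw [upd, if_neg]
    omega
  have h2 : ∀ i ∈ Finset.range m, upd q n w c (((l + i : ℕ) : ℤ) + 1)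
      = q * c (((l + i : ℕ) : ℤ) + 1) := by
    intro i hi
    have := Finset.mem_range.mp hi
    rw [upd, if_pos]
    push_cast; omega
  generalize hu : upd q n w c = u at *
  rw [hl, Finset.prod_range_add, Finset.prod_range_add]
  rw [Finset.prod_congr rfl h1, Finset.prod_congr rfl h2, Finset.prod_mul_distrib]
  simp only [Finset.prod_const, Finset.card_range]
  ring

theorem Data_cons (w : ℕ) (V : List ℕ) (a b g d : ℚ) (h : Data V a b g d) (e1 e0 m : ℕ)
    (h1 : e1 = if V.length + 2 ≤ w then 1 else 0) (h0 : e0 = if V.length + 1 ≤ w then 1 else 0)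
    (hm : m = min V.length w) (hw : 1 ≤ w) :
    Data (w :: V) (a * (w - e1)) (b * (w - e0)) (g * (m + e1)) (d * (m + e0)) := by
  obtain ⟨α, β, γ, δ, hα, hβ, hγ, hδ, H⟩ := h
  have hE1 : e1 ≤ w := by split_ifs at h1 <;> omega
  have hE0 : e0 ≤ w := by split_ifs at h0 <;> omega
  have u1 : ∀ c : ℤ → K, upd qq V.length w c (-1) = qq ^ e1 * c (-1) := by
    intro c
    by_cases hc : V.length + 2 ≤ w
    · rw [upd, if_pos (by omega), h1, if_pos hc, pow_one]
    · rw [upd, if_neg (by omega), h1, if_neg hc, pow_zero, one_mul]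
  have u0 : ∀ c : ℤ → K, upd qq V.length w c 0 = qq ^ e0 * c 0 := by
    intro c
    by_cases hc : V.length + 1 ≤ w
    · rw [upd, if_pos (by omega), h0, if_pos hc, pow_one]
    · rw [upd, if_neg (by omega), h0, if_neg hc, pow_zero, one_mul]
  refine ⟨_, _, _, _, hα.mul (Ev_fac e1 w hE1), hβ.mul (Ev_fac e0 w hE0),
    by simpa using hγ.mul (Ev_fac 0 (m + e1) (Nat.zero_le _)),
    by simpa using hδ.mul (Ev_fac 0 (m + e0) (Nat.zero_le _)), fun c => ?_⟩
  obtain ⟨A1, A2, A3, A4⟩ := H c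
  obtain ⟨B1, B2, B3, B4⟩ := H (upd qq V.length w c)
  rw [prod_upd qq V.length w m hm] at B4
  rw [u1, u0] at B3 B4
  have key : ∀ (x y : K) (p r : Polynomial K), (Polynomial.C x * Polynomial.X - Polynomial.C y) * p
      + (1 - Polynomial.C x * Polynomial.X) * r
      = Polynomial.C x * (p - r) * Polynomial.X + (r - Polynomial.C y * p) := by
    intros; ring
  rw [FF_cons, key]
  generalize FF qq V c = p at *
  generalize FF qq V (upd qq V.length w c) = r at *
  have z1 : p.coeff (V.length + 1 + 1) = 0 :=
    Polynomial.coeff_eq_zero_of_natDegree_lt (by omega)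
  have z2 : r.coeff (V.length + 1 + 1) = 0 :=
    Polynomial.coeff_eq_zero_of_natDegree_lt (by omega)
  refine ⟨?_, ?_, ?_, ?_⟩
  · rw [List.length_cons]
    rw [Polynomial.natDegree_le_iff_coeff_eq_zero]
    intro N hN
    obtain ⟨M, rfl⟩ : ∃ M, N = M + 1 := ⟨N - 1, by omega⟩
    have y1 : p.coeff (M + 1) = 0 := Polynomial.coeff_eq_zero_of_natDegree_lt (by omega)
    have y2 : r.coeff (M + 1) = 0 := Polynomial.coeff_eq_zero_of_natDegree_lt (by omega)
    have y3 : p.coeff M = 0 := Polynomial.coeff_eq_zero_of_natDegree_lt (by omega)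
    have y4 : r.coeff M = 0 := Polynomial.coeff_eq_zero_of_natDegree_lt (by omega)
    simp only [Polynomial.coeff_C_mul, Polynomial.coeff_add, Polynomial.coeff_mul_X,
      Polynomial.coeff_sub, y1, y2, y3, y4]
    ring
  · simp only [Polynomial.coeff_C_mul, Polynomial.coeff_add, Polynomial.mul_coeff_zero,
      Polynomial.coeff_X_zero, Polynomial.coeff_sub, A2, B2]
    ring
  · rw [show (1 : ℕ) = 0 + 1 from rfl]
    simp only [Polynomial.coeff_C_mul, Polynomial.coeff_add, Polynomial.coeff_mul_X,
      Polynomial.coeff_sub, A2, B2]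
    rw [zero_add, A3, B3]
    ring
  · rw [List.length_cons]
    simp only [Polynomial.coeff_C_mul, Polynomial.coeff_add, Polynomial.coeff_mul_X,
      Polynomial.coeff_sub, z1, z2, A4, B4, Finset.prod_range_succ]
    ring

theorem Data_three (V : List ℕ) (h : Good (-2) (V ++ [3])) :
    ∃ a b g d : ℚ, Data (V ++ [3]) a b g d ∧ 0 ≤ g ∧ 0 ≤ d ∧ g < b ∧ d < a := by
  induction V with
  | nil =>
    refine ⟨_, _, _, _, Data_cons 3 [] _ _ _ _ Data_nil 1 1 0 (by simp) (by simp) (by simp)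
      (by simp), ?_⟩
    norm_num
  | cons w V ih =>
    obtain ⟨h1, h2, h3⟩ := h
    obtain ⟨a, b, g, d, hD, hg, hd, hgb, hda⟩ := ih h1
    have hl : 1 ≤ (V ++ [3]).length := by simp
    rw [List.cons_append]
    change (w : ℤ) ≤ (V ++ [3]).length + 1 - (-2) at h3
    generalize V ++ [3] = U at *
    obtain ⟨e1, he1⟩ : ∃ e1, e1 = if U.length + 2 ≤ w then 1 else 0 := ⟨_, rfl⟩
    obtain ⟨e0, he0⟩ : ∃ e0, e0 = if U.length + 1 ≤ w then 1 else 0 := ⟨_, rfl⟩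
    obtain ⟨m, hm⟩ : ∃ m, m = min U.length w := ⟨_, rfl⟩
    have f1 : m + e1 + e0 ≤ w ∧ e1 < w ∧ e0 < w := by
      split_ifs at he1 he0 <;> omega
    obtain ⟨f1, f2, f3⟩ := f1
    have f1' : (m : ℚ) + e1 + e0 ≤ w := by exact_mod_cast f1
    have f2' : (e1 : ℚ) < w := by exact_mod_cast f2
    have f3' : (e0 : ℚ) < w := by exact_mod_cast f3
    refine ⟨_, _, _, _, Data_cons w U _ _ _ _ hD e1 e0 m he1 he0 hm h2, by positivity,
      by positivity, ?_, ?_⟩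
    · calc g * (m + e1) ≤ g * (w - e0) := by gcongr; linarith
        _ < b * (w - e0) := by
          apply mul_lt_mul_of_pos_right hgb; linarith
    · calc d * (m + e0) ≤ d * (w - e1) := by gcongr; linarith
        _ < a * (w - e1) := by
          apply mul_lt_mul_of_pos_right hda; linarith

theorem tame_coeff (W : List ℕ) (hW : W ≠ []) (ht : TameFE qq W)
    (hd : (Qsched qq W).natDegree ≤ W.length + 1) (h0 : (Qsched qq W).coeff 0 = 0) :
    (Qsched qq W).coeff (W.length + 1) - qq * (Qsched qq W).coeff 1 =
      (1 - qq ^ 2) * (W.map (qint qq)).prod := by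
  unfold TameFE at ht
  generalize Qsched qq W = Q at *
  generalize (1 - qq ^ 2) * (W.map (qint qq)).prod = c at *
  have hk : 1 ≤ W.length := List.length_pos_iff.mpr hW
  generalize W.length = n at *
  have hp : (Polynomial.X - Polynomial.C qq) * Q + (1 - Polynomial.C qq * Polynomial.X) *
      Polynomial.reflect (n + 1) Q * Polynomial.X
      = (1 + Polynomial.X ^ (n + 1)) * Polynomial.C c * Polynomial.X := by
    apply Polynomial.eq_of_infinite_eval_eq
    apply Set.Infinite.mono (s := {x : K | x ≠ 0})
    · intro x hx
      have hx' : x ≠ 0 := hx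
      have h := ht x hx'
      have hr : (Polynomial.reflect (n + 1) Q).eval x = x ^ (n + 1) * Q.eval x⁻¹ := by
        let i1 : Invertible (x⁻¹) := invertibleOfNonzero (inv_ne_zero hx')
        have h5 := Polynomial.eval₂_reflect_mul_pow (RingHom.id K) (x⁻¹) (n + 1) Q hd
        rw [invOf_eq_inv, inv_inv] at h5
        change (Polynomial.reflect (n + 1) Q).eval x * _ = Q.eval x⁻¹ at h5
        rw [← h5, inv_pow]
        field_simp
      simp only [Set.mem_ofPred_eq, Polynomial.eval_add, Polynomial.eval_mul, Polynomial.eval_sub,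
        Polynomial.eval_X, Polynomial.eval_C, Polynomial.eval_one, Polynomial.eval_pow, hr]
      have h2 : x * (1 - qq / x) = x - qq := by field_simp
      rw [← h2]
      linear_combination x * h
    · exact (Set.finite_singleton (0 : K)).infinite_compl
  have h1 := congrArg (fun p => Polynomial.coeff p 1) hp
  have hx : ((1 + Polynomial.X ^ (n + 1)) * Polynomial.C c * Polynomial.X).coeff (0 + 1) = c := by
    rw [Polynomial.coeff_mul_X]
    simp
  have hy : ((Polynomial.X - Polynomial.C qq) * Q).coeff (0 + 1) = - qq * Q.coeff 1 := by
    rw [sub_mul, Polynomial.coeff_sub, Polynomial.coeff_X_mul, h0, Polynomial.coeff_C_mul]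
    simp
  have hz : ((1 - Polynomial.C qq * Polynomial.X) *
      Polynomial.reflect (n + 1) Q * Polynomial.X).coeff (0 + 1) = Q.coeff (n + 1) := by
    rw [Polynomial.coeff_mul_X, Polynomial.mul_coeff_zero, Polynomial.coeff_reflect]
    simp
  simp only [Polynomial.coeff_add] at h1
  rw [zero_add] at hx hy hz
  rw [hx, hy, hz] at h1
  linear_combination h1

theorem not_tame (W : List ℕ) (hG : Good (-2) (3 :: W).reverse) : ¬ TameFE qq (3 :: W) := by
  intro ht
  rw [List.reverse_cons] at hG
  obtain ⟨a, b, g, d, ⟨α, β, γ, δ, hα, hβ, hγ, hδ, H⟩, hg, hd, hgb, hda⟩ := Data_three _ hG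
  have hQ : Qsched qq (3 :: W) = FF qq (W.reverse ++ [3]) (fun _ => 1) := by
    simp [Qsched, FF, Psched]
  obtain ⟨A1, A2, A3, A4⟩ := H (fun _ => 1)
  rw [← hQ] at A1 A2 A3 A4
  have hlen : (W.reverse ++ [3]).length = (3 :: W).length := by simp
  rw [hlen] at A1 A4
  have h := tame_coeff _ (by simp) ht A1 A2
  rw [A3, A4] at h
  simp only [Finset.prod_const_one, one_mul, mul_one] at h
  obtain ⟨r, hr⟩ := Ev_prod (3 :: W)
  have e1 := (hγ.add hδ).add ((Ev_pow 2).mul hr)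
  have e2 := (Ev_qq.mul (hα.add hβ)).add hr
  have e3 : γ + δ + qq ^ 2 * ((3 :: W).map (qint qq)).prod =
    qq * (α + β) + ((3 :: W).map (qint qq)).prod := by linear_combination h
  rw [e3] at e1
  have := e1.unique e2
  linarith

theorem tame_step (W : List ℕ) (hL : Legal (2 :: 2 :: W)) (ht : TameFE qq W) :
    TameFE qq (2 :: 2 :: W) := by
  have hG : Good (-1) W.reverse := by
    cases W with
    | nil => trivial
    | cons w W =>
      have hc : List.IsChain (fun a b : ℕ => 1 ≤ b ∧ b ≤ a + 1) (2 :: 2 :: w :: W) := hL.2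
      rw [List.isChain_cons_cons, List.isChain_cons_cons] at hc
      have hw : w ≤ 3 := hc.2.1.2
      by_cases h3 : w = 3
      · subst h3
        exact absurd ht (not_tame W (legal_good _ _ hL (by simp)))
      · apply legal_good _ _ hL
        intro _
        simp only [List.head_cons]
        omega
  intro x hx
  have h := ht x hx
  rw [structural qq qq_ne_one W hG]
  simp only [Polynomial.eval_add, Polynomial.eval_mul, Polynomial.eval_C, Polynomial.eval_X,
    Polynomial.eval_pow, List.length_cons, List.map_cons, List.prod_cons]
  have q2 : qint qq 2 = 1 + qq := by simp [qint, Finset.sum_range_succ]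
  rw [q2]
  generalize (W.map (qint qq)).prod = P at *
  generalize (Qsched qq W).eval x = A at *
  generalize (Qsched qq W).eval x⁻¹ = B at *
  generalize qq = q at *
  have e1 : x ^ (W.length + 1 + 1 + 1) = x ^ (W.length + 1) * x ^ 2 := by ring
  have e3 : x⁻¹ ^ (W.length + 3) = (x ^ (W.length + 1))⁻¹ * (x⁻¹) ^ 2 := by
    rw [← inv_pow]; ring
  rw [e1, e3]
  have hy : x ^ (W.length + 1) ≠ 0 := pow_ne_zero _ hx
  generalize x ^ (W.length + 1) = y at *
  field_simp at h ⊢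
  linear_combination q * h

/-- if W is a tame legal schedule then (2,2,W) is tame; in
particular all schedules (2,2,…,2) are tame. -/
theorem stmt12 :
    (∀ W : List ℕ, Legal (2 :: 2 :: W) → TameFE qq W → TameFE qq (2 :: 2 :: W)) ∧
      ∀ n : ℕ, TameFE qq (List.replicate n 2) := by
  refine ⟨tame_step, ?_⟩
  intro n
  induction n using Nat.twoStepInduction with
  | zero =>
    intro x hx
    simp [Qsched, Psched, Prev, Polynomial.algebraMap_eq]
    field_simp
    ring
  | one =>
    intro x hx
    have hq := qq_ne_one
    have q2 : qint qq 2 = 1 + qq := by simp [qint, Finset.sum_range_succ]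
    simp [Qsched, Psched, Prev, Polynomial.algebraMap_eq, q2, MvPolynomial.algebraMap_eq]
    field_simp
    ring
  | more n ih _ =>
    have : List.replicate (n + 2) 2 = 2 :: 2 :: List.replicate n 2 := rfl
    rw [this]
    refine tame_step _ ?_ ih
    rw [← this]
    refine ⟨by simp [List.replicate_succ], ?_⟩
    change List.IsChain _ _
    generalize n + 2 = m
    induction m with
    | zero => simp
    | succ m ihm =>
      cases m with
      | zero => simp
      | succ m =>
        rw [List.replicate_succ, List.replicate_succ, List.isChain_cons_cons]
        exact ⟨by norm_num, ihm⟩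

end
end

section
/- Every legal schedule W = (w_1,...,w_{k-1}) is tame: the polynomial Q_W(x;q) satisfies the functional equation (1-q/x)Q_W(x;q) + x^k(1-qx)Q_W(1/x;q) = (1+x^k)(1-q^2)Π_{i=1}^{k-1}[w_i]_q. -/
open Polynomial Finset

noncomputable section

/-! The proof.  We work with the evaluations of `Prev q V` at points `ρ : ℤ → K`, and with a family
of linear functionals indexed by weakly decreasing lists of window lengths. -/

/-- The family of functionals, applied to a function `f` of points. -/
def GG {Ω : Type} (x q : K) (f : Ω → K) (τ σ : ℕ → Ω → Ω) (b : ℕ → K) : List ℕ → K → Ω → K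
  | [], _, ρ => f ρ
  | v :: S, y, ρ =>
      x * GG x q f τ σ b S (q * y) (τ v ρ) - q ^ S.length * GG x q f τ σ b S y (τ v ρ) +
        b v * y * (GG x q f τ σ b S y (σ v ρ) - x * GG x q f τ σ b S (q * y) (σ v ρ))

/-- The scalar version. -/
def kk (x q : K) : List K → K → K
  | [], _ => 1
  | u :: S, y => x * (1 - y * u) * kk x q S (q * y) + (y * u - q ^ S.length) * kk x q S y

theorem GG_zero {Ω : Type} (x q : K) (f : Ω → K) (τ σ : ℕ → Ω → Ω) (b : ℕ → K)
    (h0 : ∀ ρ, τ 0 ρ = ρ) (h1 : ∀ ρ, σ 0 ρ = ρ) (hb : b 0 = 1) (S : List ℕ) :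
    ∀ y ρ, GG x q f τ σ b (S ++ [0]) (q * y) ρ =
      x * (1 - q * y * q ^ S.length) * GG x q f τ σ b S (q * y) ρ +
        q ^ S.length * (q * y - 1) * GG x q f τ σ b S y ρ := by
  induction S with
  | nil => intro y ρ; simp [GG, h0, h1, hb] <;> ring
  | cons v S ih =>
    intro y ρ
    simp only [List.cons_append, GG, ih, List.length_append, List.length_cons, List.length_nil]
    ring

theorem kk_snoc (x q : K) (z : K) (S : List K) :
    ∀ y, kk x q (S ++ [z]) (q * y) =
      x * (1 - q * y * z * q ^ S.length) * kk x q S (q * y) +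
        q ^ S.length * (q * y * z - 1) * kk x q S y := by
  induction S with
  | nil => intro y; simp [kk] <;> ring
  | cons v S ih =>
    intro y
    simp only [List.cons_append, kk, ih, List.length_append, List.length_cons, List.length_nil]
    ring

theorem kk_scale (x q : K) (S : List K) :
    ∀ y, kk x q (S.map (fun u => q * u)) y = kk x q S (q * y) := by
  induction S with
  | nil => intro y; simp [kk]
  | cons v S ih =>
    intro y
    simp only [List.map_cons, kk, ih, List.length_map]
    ring

theorem kk_snoc_scale (x q : K) (hq : q ≠ 0) (z : K) (S : List K) :
    kk x q (S.map (fun u => q * u) ++ [z]) 1 =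
      x * (1 - z * q ^ S.length) * kk x q (S.map (fun u => q * u)) 1 +
        q ^ S.length * (z - 1) * kk x q S 1 := by
  have h := kk_snoc x q z (S.map (fun u => q * u)) q⁻¹
  rw [kk_scale x q S q⁻¹, mul_inv_cancel₀ hq] at h
  rw [h]
  simp

theorem kk_snoc_one (x q : K) (hq : q ≠ 0) (S : List K) :
    kk x q (S ++ [1]) 1 = x * (1 - q ^ S.length) * kk x q S 1 := by
  have h := kk_snoc x q 1 S q⁻¹
  rw [mul_inv_cancel₀ hq] at h
  rw [h]
  simp

/-- Scaling of the last `v` variables before index `k`. -/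
def sc (q : K) (k : ℤ) (v : ℕ) (ρ : ℤ → K) : ℤ → K :=
  fun j => if k - (v : ℤ) ≤ j ∧ j ≤ k - 1 then q * ρ j else ρ j

theorem sc_zero (q : K) (k : ℤ) (ρ : ℤ → K) : sc q k 0 ρ = ρ := by
  funext j
  unfold sc
  rw [if_neg]
  push_cast
  omega

theorem sc_comm (q : K) (k : ℤ) (v w : ℕ) (ρ : ℤ → K) :
    sc q k v (sc q k w ρ) = sc q k w (sc q k v ρ) := by
  funext j
  unfold sc
  split_ifs <;> ring

/-- Evaluation of the recursively defined polynomial. -/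
def pe (q : K) (V : List ℕ) (ρ : ℤ → K) : K := MvPolynomial.eval ρ (Prev q V)

theorem pe_nil (q : K) (ρ : ℤ → K) : pe q [] ρ = q * ρ (-1) + ρ 0 := by
  simp [pe, Prev]

theorem pe_cons (q : K) (w : ℕ) (V : List ℕ) (ρ : ℤ → K) :
    pe q (w :: V) ρ = (1 - q)⁻¹ * ((ρ ((V.length : ℤ) + 1) - q ^ w) * pe q V ρ +
      (1 - ρ ((V.length : ℤ) + 1)) * pe q V (sc q ((V.length : ℤ) + 1) w ρ)) := by
  have h : MvPolynomial.eval ρ (MvPolynomial.aeval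
              (fun j : ℤ =>
                if (V.length : ℤ) + 1 - (w : ℤ) ≤ j ∧ j ≤ (V.length : ℤ) then
                  MvPolynomial.C q * MvPolynomial.X j
                else (MvPolynomial.X j : MvPolynomial ℤ K))
              (Prev q V)) = pe q V (sc q ((V.length : ℤ) + 1) w ρ) := by
    rw [MvPolynomial.aeval_def, MvPolynomial.eval_eval₂]
    unfold pe
    rw [MvPolynomial.eval, MvPolynomial.coe_eval₂Hom]
    congr 1
    · ext c; simp
    · funext j
      unfold sc
      simp only [add_sub_cancel_right]
      split_ifs <;> simp
  unfold pe at h ⊢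
  rw [Prev]
  simp only [map_mul, map_add, map_sub, MvPolynomial.eval_C, MvPolynomial.eval_X, map_one]
  rw [h]

theorem pe_congr (q : K) (V : List ℕ) : ∀ ρ ρ' : ℤ → K,
    (∀ j : ℤ, j ≤ V.length → ρ j = ρ' j) → pe q V ρ = pe q V ρ' := by
  induction V with
  | nil =>
    intro ρ ρ' h
    rw [pe_nil, pe_nil, h _ (by simp), h _ (by simp)]
  | cons w V ih =>
    intro ρ ρ' h
    simp only [List.length_cons, Nat.cast_add, Nat.cast_one] at h
    rw [pe_cons, pe_cons, h _ le_rfl, ih ρ ρ' (fun j hj => h j (by omega)),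
      ih (sc q ((V.length : ℤ) + 1) w ρ) (sc q ((V.length : ℤ) + 1) w ρ') ?_]
    intro j hj
    unfold sc
    rw [h j (by omega)]

/-- The functional on the direct side. -/
def FA (x q : K) (V S : List ℕ) (y : K) (ρ : ℤ → K) : K :=
  GG x q (pe q V) (fun _ ρ => ρ) (sc q ((V.length : ℤ) + 1)) (fun _ => 1) S y ρ

/-- The functional on the inverted side. -/
def FB (x q : K) (V S : List ℕ) (y : K) (ρ : ℤ → K) : K :=
  GG x q (pe q V) (sc q ((V.length : ℤ) + 1)) (fun _ ρ => ρ) (fun v => q ^ v) S y ρ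

theorem FA_cons (x q : K) (V S : List ℕ) (v : ℕ) (y : K) (ρ : ℤ → K) :
    FA x q V (v :: S) y ρ =
      x * FA x q V S (q * y) ρ - q ^ S.length * FA x q V S y ρ +
        y * (FA x q V S y (sc q ((V.length : ℤ) + 1) v ρ) -
          x * FA x q V S (q * y) (sc q ((V.length : ℤ) + 1) v ρ)) := by
  simp [FA, GG]

theorem FB_cons (x q : K) (V S : List ℕ) (v : ℕ) (y : K) (ρ : ℤ → K) :
    FB x q V (v :: S) y ρ =
      x * FB x q V S (q * y) (sc q ((V.length : ℤ) + 1) v ρ) -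
        q ^ S.length * FB x q V S y (sc q ((V.length : ℤ) + 1) v ρ) +
        q ^ v * y * (FB x q V S y ρ - x * FB x q V S (q * y) ρ) := by
  simp [FB, GG]

theorem sc_agree (q : K) (k : ℤ) (v : ℕ) (n : ℤ) (ρ ρ' : ℤ → K)
    (h : ∀ j : ℤ, j ≤ n → ρ j = ρ' j) :
    ∀ j : ℤ, j ≤ n → sc q k v ρ j = sc q k v ρ' j := by
  intro j hj
  unfold sc
  rw [h j hj]

theorem FA_congr (x q : K) (V S : List ℕ) : ∀ (y : K) (ρ ρ' : ℤ → K),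
    (∀ j : ℤ, j ≤ V.length → ρ j = ρ' j) → FA x q V S y ρ = FA x q V S y ρ' := by
  induction S with
  | nil => intro y ρ ρ' h; exact pe_congr q V ρ ρ' h
  | cons v S ih =>
    intro y ρ ρ' h
    rw [FA_cons, FA_cons, ih _ ρ ρ' h, ih _ ρ ρ' h, ih _ _ _ (sc_agree q _ v _ ρ ρ' h),
      ih _ _ _ (sc_agree q _ v _ ρ ρ' h)]

theorem FB_congr (x q : K) (V S : List ℕ) : ∀ (y : K) (ρ ρ' : ℤ → K),
    (∀ j : ℤ, j ≤ V.length → ρ j = ρ' j) → FB x q V S y ρ = FB x q V S y ρ' := by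
  induction S with
  | nil => intro y ρ ρ' h; exact pe_congr q V ρ ρ' h
  | cons v S ih =>
    intro y ρ ρ' h
    rw [FB_cons, FB_cons, ih _ ρ ρ' h, ih _ ρ ρ' h, ih _ _ _ (sc_agree q _ v _ ρ ρ' h),
      ih _ _ _ (sc_agree q _ v _ ρ ρ' h)]

theorem sc_succ_last (q : K) (V : List ℕ) (w v : ℕ) (ρ : ℤ → K) :
    sc q (((w :: V).length : ℤ) + 1) (v + 1) ρ ((V.length : ℤ) + 1) =
      q * ρ ((V.length : ℤ) + 1) := by
  unfold sc
  rw [if_pos]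
  simp only [List.length_cons]
  push_cast
  omega

theorem sc_succ_agree (q : K) (V : List ℕ) (w v : ℕ) (ρ : ℤ → K) (j : ℤ) (hj : j ≤ V.length) :
    sc q (((w :: V).length : ℤ) + 1) (v + 1) ρ j = sc q ((V.length : ℤ) + 1) v ρ j := by
  unfold sc
  simp only [List.length_cons]
  push_cast
  split_ifs <;> first | rfl | omega

theorem FA_step (x q : K) (hq : 1 - q ≠ 0) (V : List ℕ) (w : ℕ) (S : List ℕ) :
    ∀ (y : K) (ρ : ℤ → K), (1 - q) * FA x q (w :: V) (S.map (· + 1)) y ρ =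
      ρ ((V.length : ℤ) + 1) * (FA x q V S (q * y) ρ -
          FA x q V S (q * y) (sc q ((V.length : ℤ) + 1) w ρ)) +
        (FA x q V S y (sc q ((V.length : ℤ) + 1) w ρ) - q ^ w * FA x q V S y ρ) := by
  induction S with
  | nil =>
    intro y ρ
    simp only [List.map_nil, FA, GG]
    rw [pe_cons, mul_inv_cancel_left₀ hq]
    ring
  | cons v S ih =>
    intro y ρ
    have e1 : ∀ y, FA x q V S y (sc q (((w :: V).length : ℤ) + 1) (v + 1) ρ) =
        FA x q V S y (sc q ((V.length : ℤ) + 1) v ρ) := fun y =>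
      FA_congr x q V S y _ _ (sc_succ_agree q V w v ρ)
    have e2 : ∀ y, FA x q V S y (sc q ((V.length : ℤ) + 1) w
          (sc q (((w :: V).length : ℤ) + 1) (v + 1) ρ)) =
        FA x q V S y (sc q ((V.length : ℤ) + 1) v (sc q ((V.length : ℤ) + 1) w ρ)) := fun y => by
      rw [sc_comm q _ v w]
      exact FA_congr x q V S y _ _ (sc_agree q _ w _ _ _ (sc_succ_agree q V w v ρ))
    have i1 := ih (q * y) ρ
    have i2 := ih y ρ
    have i3 := ih (q * y) (sc q (((w :: V).length : ℤ) + 1) (v + 1) ρ)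
    have i4 := ih y (sc q (((w :: V).length : ℤ) + 1) (v + 1) ρ)
    rw [sc_succ_last] at i3 i4
    simp only [e1, e2] at i3 i4
    simp only [List.map_cons, FA_cons, List.length_map]
    linear_combination x * i1 - q ^ S.length * i2 + y * i4 - x * y * i3

theorem FB_step (x q : K) (hq : 1 - q ≠ 0) (V : List ℕ) (w : ℕ) (S : List ℕ) :
    ∀ (y : K) (ρ : ℤ → K), (1 - q) * FB x q (w :: V) (S.map (· + 1)) y ρ =
      q ^ S.length * ρ ((V.length : ℤ) + 1) * (FB x q V S y ρ -
          FB x q V S y (sc q ((V.length : ℤ) + 1) w ρ)) +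
        (FB x q V S (q * y) (sc q ((V.length : ℤ) + 1) w ρ) -
          q ^ w * FB x q V S (q * y) ρ) := by
  induction S with
  | nil =>
    intro y ρ
    simp only [List.map_nil, FB, GG]
    rw [pe_cons, mul_inv_cancel_left₀ hq]
    simp
    ring
  | cons v S ih =>
    intro y ρ
    have e1 : ∀ y, FB x q V S y (sc q (((w :: V).length : ℤ) + 1) (v + 1) ρ) =
        FB x q V S y (sc q ((V.length : ℤ) + 1) v ρ) := fun y =>
      FB_congr x q V S y _ _ (sc_succ_agree q V w v ρ)
    have e2 : ∀ y, FB x q V S y (sc q ((V.length : ℤ) + 1) w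
          (sc q (((w :: V).length : ℤ) + 1) (v + 1) ρ)) =
        FB x q V S y (sc q ((V.length : ℤ) + 1) v (sc q ((V.length : ℤ) + 1) w ρ)) := fun y => by
      rw [sc_comm q _ v w]
      exact FB_congr x q V S y _ _ (sc_agree q _ w _ _ _ (sc_succ_agree q V w v ρ))
    have i1 := ih (q * y) ρ
    have i2 := ih y ρ
    have i3 := ih (q * y) (sc q (((w :: V).length : ℤ) + 1) (v + 1) ρ)
    have i4 := ih y (sc q (((w :: V).length : ℤ) + 1) (v + 1) ρ)
    rw [sc_succ_last] at i3 i4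
    simp only [e1, e2] at i3 i4
    simp only [List.map_cons, FB_cons, List.length_map, List.length_cons]
    linear_combination x * i3 - q ^ S.length * i4 + q ^ (v + 1) * y * (i2 - x * i1)

/-- The generalized functional equation. -/
def RelK (x q : K) (V S : List ℕ) : Prop :=
  (x - q) * FA x q V S 1 (fun _ => x) +
      x ^ (V.length + 2) * (1 - q * x) * FB x q V S 1 (fun _ => x⁻¹) =
    (1 - q ^ 2) * (V.map (qint q)).prod *
      (x ^ (V.length + 2) * kk x q (S.map (fun v => q ^ v)) 1 + x * kk x q (S.map (fun _ => 1)) 1)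

theorem RelK_zero (x q : K) (hq : q ≠ 0) (V S : List ℕ) (h : RelK x q V S) :
    RelK x q V (S ++ [0]) := by
  unfold RelK at h ⊢
  have hA := GG_zero x q (pe q V) (fun _ ρ => ρ) (sc q ((V.length : ℤ) + 1)) (fun _ => 1)
    (fun _ => rfl) (sc_zero q _) rfl S q⁻¹ (fun _ => x)
  have hB := GG_zero x q (pe q V) (sc q ((V.length : ℤ) + 1)) (fun _ ρ => ρ) (fun v => q ^ v)
    (sc_zero q _) (fun _ => rfl) (pow_zero q) S q⁻¹ (fun _ => x⁻¹)
  rw [mul_inv_cancel₀ hq] at hA hB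
  change FA x q V (S ++ [0]) 1 _ = _ * FA x q V S 1 _ + _ at hA
  change FB x q V (S ++ [0]) 1 _ = _ * FB x q V S 1 _ + _ at hB
  rw [hA, hB, List.map_append, List.map_append]
  simp only [List.map_cons, List.map_nil, pow_zero]
  rw [kk_snoc_one x q hq, kk_snoc_one x q hq, List.length_map, List.length_map]
  linear_combination x * (1 - q ^ S.length) * h

theorem qint_mul (q : K) (w : ℕ) : (1 - q) * qint q w = 1 - q ^ w := by
  unfold qint
  exact mul_neg_geom_sum q w

theorem RelK_step (x q : K) (hx : x ≠ 0) (hq : 1 - q ≠ 0) (V : List ℕ) (w : ℕ) (S : List ℕ)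
    (h1 : RelK x q V S) (h2 : RelK x q V (w :: S)) : RelK x q (w :: V) (S.map (· + 1)) := by
  unfold RelK at *
  have hA := FA_step x q hq V w S 1 (fun _ => x)
  have hB := FB_step x q hq V w S 1 (fun _ => x⁻¹)
  have e1 : kk x q ((S.map (· + 1)).map (fun v => q ^ v)) 1 =
      kk x q (S.map (fun v => q ^ v)) (q * 1) := by
    rw [← kk_scale, List.map_map, List.map_map]
    congr 1
    apply List.map_congr_left
    intro v _
    simp [pow_succ']
  have e2 : kk x q ((S.map (· + 1)).map (fun _ => 1)) 1 = kk x q (S.map (fun _ => 1)) 1 := by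
    rw [List.map_map]; rfl
  rw [FA_cons, FB_cons] at h2
  simp only [List.map_cons, kk, List.length_map] at h2
  rw [e1, e2]
  simp only [List.map_cons, List.prod_cons, List.length_cons]
  apply mul_left_cancel₀ hq
  have hw := qint_mul q w
  have hxx : x * x⁻¹ = 1 := mul_inv_cancel₀ hx
  have hB' : x * ((1 - q) * FB x q (w :: V) (S.map (· + 1)) 1 (fun _ => x⁻¹)) =
      q ^ S.length * (FB x q V S 1 (fun _ => x⁻¹) -
          FB x q V S 1 (sc q ((V.length : ℤ) + 1) w (fun _ => x⁻¹))) +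
        x * (FB x q V S (q * 1) (sc q ((V.length : ℤ) + 1) w (fun _ => x⁻¹)) -
          q ^ w * FB x q V S (q * 1) (fun _ => x⁻¹)) := by
    rw [hB]
    linear_combination q ^ S.length * (FB x q V S 1 (fun _ => x⁻¹) -
          FB x q V S 1 (sc q ((V.length : ℤ) + 1) w (fun _ => x⁻¹))) * hxx
  linear_combination (x - q) * hA + x ^ (V.length + 2) * (1 - q * x) * hB' + h2 +
    (q ^ S.length - q ^ w) * h1 + (1 - q ^ 2) * (V.map (qint q)).prod * 
      (x ^ (V.length + 3) * kk x q (S.map (fun v => q ^ v)) (q * 1)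
        + x * kk x q (S.map (fun _ => 1)) 1) * (-hw)

/-- The bound on the next window. -/
def bd : List ℕ → ℕ
  | [] => 2
  | w :: _ => w + 1

def LR : List ℕ → Prop
  | [] => True
  | w :: V => w ≤ bd V ∧ LR V

/-! The base case. -/

theorem al_succ (x q : K) (hq : q ≠ 0) (r : ℕ) :
    kk x q (List.replicate (r + 1) q) 1 =
      x * (1 - q ^ (r + 1)) * kk x q (List.replicate r q) 1 +
        q ^ r * (q - 1) * kk x q (List.replicate r 1) 1 := by
  have h := kk_snoc_scale x q hq q (List.replicate r 1)
  simp only [List.map_replicate, mul_one, List.length_replicate] at h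
  rw [List.replicate_succ', h]
  ring

theorem de_succ (x q : K) (hq : q ≠ 0) (r : ℕ) :
    kk x q (List.replicate (r + 1) 1) 1 = x * (1 - q ^ r) * kk x q (List.replicate r 1) 1 := by
  have h := kk_snoc_one x q hq (List.replicate r 1)
  rw [List.length_replicate] at h
  rw [List.replicate_succ', h]

theorem de_zero (x q : K) (hq : q ≠ 0) (r : ℕ) : kk x q (List.replicate (r + 1) 1) 1 = 0 := by
  induction r with
  | zero => rw [de_succ x q hq]; simp
  | succ r ih => rw [de_succ x q hq, ih, mul_zero]

theorem be_succ (x q : K) (hq : q ≠ 0) (i j : ℕ) :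
    kk x q (List.replicate i q ++ List.replicate (j + 1) 1) 1 =
      x * (1 - q ^ (i + j)) * kk x q (List.replicate i q ++ List.replicate j 1) 1 := by
  have h := kk_snoc_one x q hq (List.replicate i q ++ List.replicate j 1)
  rw [List.length_append, List.length_replicate, List.length_replicate] at h
  rw [List.replicate_succ', ← List.append_assoc, h]

theorem ga_succ (x q : K) (hq : q ≠ 0) (i j : ℕ) :
    kk x q (List.replicate i (q ^ 2) ++ List.replicate (j + 1) q) 1 =
      x * (1 - q ^ (i + j + 1)) * kk x q (List.replicate i (q ^ 2) ++ List.replicate j q) 1 +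
        q ^ (i + j) * (q - 1) * kk x q (List.replicate i q ++ List.replicate j 1) 1 := by
  have h := kk_snoc_scale x q hq q (List.replicate i q ++ List.replicate j 1)
  simp only [List.map_replicate, mul_one, List.length_replicate, List.map_append,
    List.length_append, ← pow_two] at h
  rw [List.replicate_succ', ← List.append_assoc, h]
  ring

theorem ga_zero_succ (x q : K) (hq : q ≠ 0) (i : ℕ) :
    kk x q (List.replicate (i + 1) (q ^ 2)) 1 =
      x * (1 - q ^ (i + 2)) * kk x q (List.replicate i (q ^ 2)) 1 +
        q ^ i * (q ^ 2 - 1) * kk x q (List.replicate i q) 1 := by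
  have h := kk_snoc_scale x q hq (q ^ 2) (List.replicate i q)
  simp only [List.map_replicate, List.length_replicate, ← pow_two] at h
  rw [List.replicate_succ', h]
  ring

theorem base_zero (x q : K) (hq : q ≠ 0) (i : ℕ) :
    kk x q (List.replicate i q) 1 * ((x - q) + q ^ i * (1 - q * x)) =
      (1 - q) * (x * kk x q (List.replicate i (q ^ 2)) 1 + kk x q (List.replicate i 1) 1) := by
  induction i with
  | zero => simp [kk]; ring
  | succ i ih =>
    rw [al_succ x q hq, ga_zero_succ x q hq, de_zero x q hq]
    rcases i with _ | i
    · simp [kk]; ring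
    · rw [de_zero x q hq] at ih ⊢
      linear_combination x * (1 - q ^ (i + 3)) * ih

theorem base_id (x q : K) (hq : q ≠ 0) (i j : ℕ) :
    kk x q (List.replicate (i + j) q) 1 * ((x - q) + q ^ (i + 1) * (1 - q * x)) +
      kk x q (List.replicate i q ++ List.replicate j 1) 1 *
        (q * (x - q) + q ^ (i + j) * (1 - q * x)) =
      (1 - q ^ 2) * (x * kk x q (List.replicate i (q ^ 2) ++ List.replicate j q) 1 +
        kk x q (List.replicate (i + j) 1) 1) := by
  induction j with
  | zero =>
    have h := base_zero x q hq i
    simp only [add_zero, List.replicate_zero, List.append_nil]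
    linear_combination (1 + q) * h
  | succ j ih =>
    rw [← add_assoc, al_succ x q hq, be_succ x q hq, ga_succ x q hq, de_zero x q hq]
    rcases Nat.eq_zero_or_pos (i + j) with h0 | h0
    · obtain ⟨rfl, rfl⟩ : i = 0 ∧ j = 0 := by omega
      simp [kk]; ring
    · obtain ⟨r, hr⟩ : ∃ r, i + j = r + 1 := ⟨i + j - 1, by omega⟩
      rw [hr] at ih ⊢
      rw [de_zero x q hq] at ih ⊢
      linear_combination x * (1 - q ^ (r + 2)) * ih

def ua (q : K) (v : ℕ) : K := if 2 ≤ v then q else 1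

def ub (q : K) (v : ℕ) : K := if 1 ≤ v then q else 1

theorem sc_a (q : K) (v : ℕ) (ρ : ℤ → K) :
    sc q (((([] : List ℕ).length : ℕ) : ℤ) + 1) v ρ (-1) = ua q v * ρ (-1) := by
  unfold sc ua
  simp only [List.length_nil, Nat.cast_zero]
  split_ifs <;> first | rfl | omega | (rw [one_mul])

theorem sc_b (q : K) (v : ℕ) (ρ : ℤ → K) :
    sc q (((([] : List ℕ).length : ℕ) : ℤ) + 1) v ρ 0 = ub q v * ρ 0 := by
  unfold sc ub
  simp only [List.length_nil, Nat.cast_zero]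
  split_ifs <;> first | rfl | omega | (rw [one_mul])

theorem FA_base (x q : K) (S : List ℕ) : ∀ (y : K) (ρ : ℤ → K),
    FA x q [] S y ρ = q * ρ (-1) * kk x q (S.map (ua q)) y + ρ 0 * kk x q (S.map (ub q)) y := by
  induction S with
  | nil => intro y ρ; simp [FA, GG, kk, pe_nil]
  | cons v S ih =>
    intro y ρ
    rw [FA_cons]
    simp only [ih, sc_a, sc_b, List.map_cons, kk, List.length_map]
    ring

theorem FB_base (x q : K) (hq : q ≠ 0) (S : List ℕ) : ∀ (y : K) (ρ : ℤ → K),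
    FB x q [] S y ρ =
      q * ρ (-1) * (S.map (ua q)).prod * kk x q (S.map (fun v => q ^ v / ua q v)) y +
        ρ 0 * (S.map (ub q)).prod * kk x q (S.map (fun v => q ^ v / ub q v)) y := by
  induction S with
  | nil => intro y ρ; simp [FB, GG, kk, pe_nil]
  | cons v S ih =>
    intro y ρ
    have ha : ua q v ≠ 0 := by unfold ua; split_ifs <;> simp [hq]
    have hb : ub q v ≠ 0 := by unfold ub; split_ifs <;> simp [hq]
    obtain ⟨a, hA⟩ : ∃ a, a = q ^ v / ua q v := ⟨_, rfl⟩
    obtain ⟨b, hB⟩ : ∃ b, b = q ^ v / ub q v := ⟨_, rfl⟩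
    have hA' : q ^ v = ua q v * a := by rw [hA]; field_simp
    have hB' : q ^ v = ub q v * b := by rw [hB]; field_simp
    rw [FB_cons]
    simp only [ih, sc_a, sc_b, List.map_cons, kk, List.length_map, List.prod_cons]
    rw [← hA, ← hB]
    generalize kk x q (S.map (fun v => q ^ v / ua q v)) = k1
    generalize kk x q (S.map (fun v => q ^ v / ub q v)) = k2
    linear_combination y * q * ρ (-1) * (S.map (ua q)).prod * (k1 y - x * k1 (q * y)) * hA' +
      y * ρ 0 * (S.map (ub q)).prod * (k2 y - x * k2 (q * y)) * hB'

theorem RelK_base (x q : K) (hx : x ≠ 0) (hq : q ≠ 0) (i j : ℕ) :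
    RelK x q [] (List.replicate i 2 ++ List.replicate j 1) := by
  unfold RelK
  rw [FA_base, FB_base x q hq]
  have a1 : ua q 1 = 1 := by simp [ua]
  have a2 : ua q 2 = q := by simp [ua]
  have b1 : ub q 1 = q := by simp [ub]
  have b2 : ub q 2 = q := by simp [ub]
  have c : q ^ 2 / q = q := by field_simp
  simp only [List.map_append, List.map_replicate, a1, a2, b1, b2, c, pow_one, div_one, div_self hq,
    List.prod_append, List.prod_replicate, one_pow, mul_one, List.replicate_append_replicate,
    List.map_nil, List.prod_nil, List.length_nil]
  have h := base_id x q hq i j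
  generalize kk x q (List.replicate (i + j) q) 1 = al at *
  generalize kk x q (List.replicate i q ++ List.replicate j 1) 1 = be at *
  generalize kk x q (List.replicate i (q ^ 2) ++ List.replicate j q) 1 = ga at *
  generalize kk x q (List.replicate (i + j) 1) 1 = de at *
  have hxx : x * x⁻¹ = 1 := mul_inv_cancel₀ hx
  linear_combination x * h + x * (1 - q * x) * (q * q ^ i * al + q ^ (i + j) * be) * hxx

theorem sorted_two (S : List ℕ) (hs : S.Pairwise (· ≥ ·)) (hb : ∀ v ∈ S, v ≤ 2) :
    ∃ i j l, S = List.replicate i 2 ++ List.replicate j 1 ++ List.replicate l 0 := by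
  induction S with
  | nil => exact ⟨0, 0, 0, rfl⟩
  | cons v S ih =>
    rw [List.pairwise_cons] at hs
    obtain ⟨i, j, l, h⟩ := ih hs.2 (fun u hu => hb u (List.mem_cons_of_mem _ hu))
    have hv := hb v List.mem_cons_self
    have h2 : v ≤ 1 → i = 0 := by
      intro hv1
      by_contra hi
      have := hs.1 2 (by rw [h]; simp [hi])
      omega
    have h1 : v ≤ 0 → j = 0 := by
      intro hv1
      by_contra hi
      have := hs.1 1 (by rw [h]; simp [hi])
      omega
    interval_cases v
    · obtain rfl := h2 (by omega)
      obtain rfl := h1 le_rfl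
      exact ⟨0, 0, l + 1, by rw [h]; simp [List.replicate_succ]⟩
    · obtain rfl := h2 (by omega)
      exact ⟨0, j + 1, l, by rw [h]; simp [List.replicate_succ]⟩
    · exact ⟨i + 1, j, l, by rw [h]; simp [List.replicate_succ]⟩

theorem RelK_main (x q : K) (hx : x ≠ 0) (hq : q ≠ 0) (hq1 : 1 - q ≠ 0) (V : List ℕ) :
    LR V → ∀ S : List ℕ, S.Pairwise (· ≥ ·) → (∀ v ∈ S, v ≤ bd V) → RelK x q V S := by
  induction V with
  | nil =>
    intro _ S hs hb
    obtain ⟨i, j, l, rfl⟩ := sorted_two S hs hb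
    clear hs hb
    induction l with
    | zero => simpa using RelK_base x q hx hq i j
    | succ l ih =>
      rw [List.replicate_succ', ← List.append_assoc]
      exact RelK_zero x q hq _ _ ih
  | cons w V ih =>
    intro hV S
    obtain ⟨hw, hV⟩ := hV
    induction S using List.reverseRecOn with
    | nil =>
      intro _ _
      have h1 := ih hV [] List.Pairwise.nil (by simp)
      have h2 := ih hV [w] (List.pairwise_singleton _ _) (by simpa using hw)
      simpa using RelK_step x q hx hq1 V w [] h1 h2
    | append_singleton S a ihS =>
      intro hs hb
      rcases Nat.eq_zero_or_pos a with rfl | ha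
      · exact RelK_zero x q hq _ _ (ihS (List.pairwise_append.1 hs).1
          (fun v hv => hb v (List.mem_append_left _ hv)))
      · have hpos : ∀ v ∈ S ++ [a], 1 ≤ v := by
          intro v hv
          rcases List.mem_append.1 hv with h | h
          · have := (List.pairwise_append.1 hs).2.2 v h a (by simp)
            omega
          · simp at h; omega
        obtain ⟨T, hT⟩ : ∃ T, T = S ++ [a] := ⟨_, rfl⟩
        rw [← hT] at hs hb hpos ⊢
        have e : (T.map (· - 1)).map (· + 1) = T := by
          rw [List.map_map]
          conv_rhs => rw [← List.map_id T]
          apply List.map_congr_left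
          intro v hv
          have := hpos v hv
          simp; omega
        have hs0 : (T.map (· - 1)).Pairwise (· ≥ ·) := by
          rw [List.pairwise_map]
          exact hs.imp (fun h => Nat.sub_le_sub_right h 1)
        have hb0 : ∀ v ∈ T.map (· - 1), v ≤ w := by
          intro v hv
          obtain ⟨u, hu, rfl⟩ := List.mem_map.1 hv
          have := hb u hu
          simp only [bd] at this
          omega
        rw [← e]
        apply RelK_step x q hx hq1 V w
        · exact ih hV _ hs0 (fun v hv => (hb0 v hv).trans hw)
        · apply ih hV
          · exact List.pairwise_cons.2 ⟨hb0, hs0⟩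
          · intro v hv
            rcases List.mem_cons.1 hv with rfl | h
            · exact hw
            · exact (hb0 v h).trans hw

theorem LR_of (W : List ℕ) : (∀ h : W ≠ [], W.head h ≤ 2) →
    List.IsChain (fun a b => 1 ≤ b ∧ b ≤ a + 1) W → LR W.reverse := by
  induction W using List.reverseRecOn with
  | nil => intro _ _; trivial
  | append_singleton W a ih =>
    intro h1 h2
    rw [List.isChain_append] at h2
    rw [List.reverse_append, List.reverse_singleton, List.singleton_append]
    refine ⟨?_, ih ?_ h2.1⟩
    · rcases List.eq_nil_or_concat W with rfl | ⟨T, c, rfl⟩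
      · simpa [bd] using h1
      · have := (h2.2.2 c (by simp) a (by simp)).2
        simpa [bd] using this
    · intro h
      have := h1 (by simp)
      rwa [List.head_append_of_ne_nil h] at this

theorem Q_eval (q : K) (W : List ℕ) (x : K) :
    (Qsched q W).eval x = pe q W.reverse (fun _ => x) := by
  unfold Qsched Psched pe
  rw [← Polynomial.coe_evalRingHom, MvPolynomial.aeval_def, MvPolynomial.hom_eval₂]
  rw [MvPolynomial.eval, MvPolynomial.coe_eval₂Hom]
  congr 1
  · ext c; simp
  · funext j; simp

theorem qq_ne_zero : qq ≠ 0 := RatFunc.X_ne_zero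

theorem one_sub_qq : 1 - qq ≠ 0 := by
  intro h
  have h1 : (RatFunc.X : RatFunc ℚ) = 1 := (sub_eq_zero.1 h).symm
  rw [← RatFunc.algebraMap_X, ← map_one (algebraMap ℚ[X] (RatFunc ℚ))] at h1
  have h2 := RatFunc.algebraMap_injective ℚ h1
  have h3 := congrArg (Polynomial.eval 0) h2
  simp at h3

/-- Main theorem: every legal schedule is tame, i.e. Q_W satisfies
(1-q/x)Q_W(x;q) + x^k(1-qx)Q_W(1/x;q) = (1+x^k)(1-q²)∏[w_i]_q. -/
theorem stmt18 (W : List ℕ) (hW : Legal W) : TameFE qq W := by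
  have hL : LR W.reverse := LR_of W (fun h => (hW.1 h).2) hW.2
  intro x hx
  have h := RelK_main x qq hx qq_ne_zero one_sub_qq W.reverse hL [] List.Pairwise.nil (by simp)
  unfold RelK at h
  rw [List.map_reverse, List.prod_reverse, List.length_reverse] at h
  simp only [FA, FB, GG, kk, List.map_nil] at h
  rw [Q_eval, Q_eval]
  apply mul_left_cancel₀ hx
  have e : x * (1 - qq / x) = x - qq := by field_simp
  rw [mul_add, ← mul_assoc, e]
  linear_combination h

end
end
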